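/- The number of standard truncated Young tableaux of shape n^m \ (k^{k-1}, k-1) (an m×n rectangle with a k×k square minus one corner box removed from its upper right corner) equals binom(nm - k^2 + 1, m(n-k)) * binom(k(m+n-2k)+1, kn - k^2)^{-1} * f_{(m^{n-k})} * f_{((m-k)^k)}, where f_λ denotes the number of standard Young tableaux of rectangular shape λ. -/

import Mathlib

open Finset
open scoped Classical

noncomputable section

/-- Cells of the skew Young diagram `lam / mu` (0-indexed: cell `(i,j)` with `mu i ≤ j < lam i`). -/
def skewCells (lam mu : ℕ →₀ ℕ) : Finset (ℕ × ℕ) :=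
  lam.support.biUnion fun i =>
    ((Finset.range (lam i)).filter fun j => mu i ≤ j).image fun j => (i, j)

/-- A finitely supported function is a partition if it is antitone. -/
def IsPartition (l : ℕ →₀ ℕ) : Prop := ∀ i j : ℕ, i ≤ j → l j ≤ l i

/-- The type of all integer partitions. -/
def Ptn : Type := {l : ℕ →₀ ℕ // IsPartition l}

/-- Semistandard condition: rows weakly increase, columns strictly increase. -/
def IsSSYT (lam mu : ℕ →₀ ℕ) (n : ℕ) (T : skewCells lam mu → Fin n) : Prop :=
  ∀ c c' : skewCells lam mu,
    ((c : ℕ × ℕ).1 = (c' : ℕ × ℕ).1 → (c : ℕ × ℕ).2 ≤ (c' : ℕ × ℕ).2 → T c ≤ T c') ∧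
    ((c : ℕ × ℕ).2 = (c' : ℕ × ℕ).2 → (c : ℕ × ℕ).1 < (c' : ℕ × ℕ).1 → T c < T c')

/-- The (skew) Schur polynomial `s_{lam/mu}` in `n` variables, evaluated at `u`. -/
def skewSchur {R : Type*} [CommSemiring R] (n : ℕ) (lam mu : ℕ →₀ ℕ) (u : Fin n → R) : R :=
  ∑ T ∈ Finset.univ.filter (IsSSYT lam mu n), ∏ c : skewCells lam mu, u (T c)

/-- The number of standard Young tableaux of an arbitrary (truncated) diagram `D`:
bijective fillings increasing along rows and down columns. -/
def sytCard (D : Finset (ℕ × ℕ)) : ℕ :=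
  (Finset.univ.filter fun T : D → Fin D.card => Function.Bijective T ∧
    ∀ c c' : D, ((c : ℕ × ℕ).1 = (c' : ℕ × ℕ).1 → (c : ℕ × ℕ).2 < (c' : ℕ × ℕ).2 → T c < T c') ∧
      ((c : ℕ × ℕ).2 = (c' : ℕ × ℕ).2 → (c : ℕ × ℕ).1 < (c' : ℕ × ℕ).1 → T c < T c')).card

/-- Complete homogeneous symmetric polynomial of degree `s` in `p` variables, evaluated at `u`. -/
def hpoly {R : Type*} [CommSemiring R] (p s : ℕ) (u : Fin p → R) : R :=
  ∑ f ∈ Finset.univ.filter (fun f : Fin s → Fin p => Monotone f), ∏ t, u (f t)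

/-- The rectangular partition `(p^k)`. -/
def rectPtn (k p : ℕ) : ℕ →₀ ℕ :=
  Finsupp.onFinset (Finset.range k) (fun i => if i < k then p else 0)
    (fun a ha => by
      simp only [Finset.mem_range]
      by_contra h
      simp [h] at ha)

/-- Plane partition of shape `D`: supported on `D`, weakly decreasing along rows and columns. -/
def IsPPofShape (D : Finset (ℕ × ℕ)) (T : ℕ × ℕ → ℕ) : Prop :=
  (∀ c, c ∉ D → T c = 0) ∧ ∀ c ∈ D, ∀ c' ∈ D,
    (c.1 = c'.1 → c.2 ≤ c'.2 → T c' ≤ T c) ∧ (c.2 = c'.2 → c.1 ≤ c'.1 → T c' ≤ T c)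

/-!
A standard tableau of the truncated shape is a linear extension of its cells. Cut it at the moment
when the inner corner cell `p = (k - 1, n - k)` is filled: the cells filled before `p` consist of
`k` full rows of length `a = n - k` on top of a Young diagram `ν` contained in the box with
`b = m - k` rows and `a` columns, and the cells filled after `p` form the complement of `ν` in the
box widened by `k` columns.

Adding `k` full rows to `ν`, or `k` columns to its complement, adds `k` to all beta numbers. By
Frobenius' formula the number of tableaux is a Vandermonde determinant in the beta numbers, which
does not see this translation, times a quotient of factorials. The beta numbers of the conjugate of
`ν` and of its complement partition `{0, …, a + b - 1}`, so all factorials of beta numbers together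
contribute a constant, and the `ν`-term equals, up to a factor depending only on `|ν|`, the number
of tableaux of the `a × b` box whose first `|ν|` entries fill `ν`. The sum over `ν` is then a
Chu–Vandermonde convolution.
-/

section LinearExtensions

variable {α β : Type*} [PartialOrder α] [DecidableEq α] [PartialOrder β] [DecidableEq β]

/-- The injective strictly monotone maps from a finite set `D` in a partial order to `Fin N`.
For `N = #D` these are the linear extensions of the induced order on `D`; keeping `N` free avoids
casts when an element of `D` is removed. -/
def linExts (D : Finset α) (N : ℕ) : Finset (D → Fin N) :=
  univ.filter fun T => Function.Injective T ∧ StrictMono T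

/-- The number of linear extensions of the order induced on `D`. -/
def numLinExts (D : Finset α) : ℕ := #(linExts D #D)

theorem mem_linExts {D : Finset α} {N : ℕ} {T : D → Fin N} :
    T ∈ linExts D N ↔ Function.Injective T ∧ StrictMono T := by
  simp [linExts]

theorem numLinExts_empty : numLinExts (∅ : Finset α) = 1 := by
  rw [numLinExts, linExts, filter_true_of_mem, card_univ]
  · exact Fintype.card_unique
  · exact fun T _ => ⟨fun x => absurd x.2 (notMem_empty _), fun x => absurd x.2 (notMem_empty _)⟩

theorem numLinExts_eq_of_bijOn {D : Finset α} {E : Finset β} {f : α → β} (hf : Set.BijOn f D E)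
    (hlt : ∀ x ∈ D, ∀ y ∈ D, f x < f y ↔ x < y) : numLinExts E = numLinExts D := by
  let e : D ≃ E := hf.equiv
  let c : Fin #D ≃o Fin #E := Fin.castOrderIso (hf.finsetCard_eq f)
  refine (card_equiv (e.arrowCongr c.toEquiv) fun T => ?_).symm
  have hmono : StrictMono (T ∘ e.symm) ↔ StrictMono T :=
    ⟨fun h x y hxy => by
      simpa using h (show e x < e y from (hlt x x.2 y y.2).2 hxy),
     fun h => h.comp fun x y hxy => (hlt _ (e.symm x).2 _ (e.symm y).2).1 <| by
      change (e (e.symm x) : β) < e (e.symm y)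
      simpa using hxy⟩
  rw [mem_linExts, mem_linExts, ← hmono, ← e.symm.injective_comp]
  exact and_congr (c.injective.of_comp_iff _).symm
    ⟨c.strictMono.comp, fun h x y hxy => c.lt_iff_lt.1 (h hxy)⟩

theorem numLinExts_eq_of_bijOn_of_anti {D : Finset α} {E : Finset β} {f : α → β}
    (hf : Set.BijOn f D E) (hlt : ∀ x ∈ D, ∀ y ∈ D, f x < f y ↔ y < x) :
    numLinExts E = numLinExts D := by
  let e : D ≃ E := hf.equiv
  let c : (Fin #D)ᵒᵈ ≃o Fin #E := Fin.revOrderIso.trans (Fin.castOrderIso (hf.finsetCard_eq f))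
  refine (card_equiv (e.arrowCongr (OrderDual.toDual.trans c.toEquiv)) fun T => ?_).symm
  have hanti : StrictAnti (T ∘ e.symm) ↔ StrictMono T :=
    ⟨fun h x y hxy => by
      simpa using h (show e y < e x from (hlt y y.2 x x.2).2 hxy),
     fun h => h.comp_strictAnti fun x y hxy => (hlt _ (e.symm x).2 _ (e.symm y).2).1 <| by
      change (e (e.symm x) : β) < e (e.symm y)
      simpa using hxy⟩
  rw [mem_linExts, mem_linExts, ← hanti, ← e.symm.injective_comp]
  exact and_congr (c.injective.of_comp_iff _).symm
    ⟨fun h => c.strictMono.comp h.dual_right, fun h x y hxy => c.lt_iff_lt.1 (h hxy)⟩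

theorem restrict_mem_linExts {D : Finset α} {N : ℕ} {c : α} (hc : c ∈ D) {T : D → Fin (N + 1)}
    (hT : T ∈ linExts D (N + 1)) (hlast : T ⟨c, hc⟩ = Fin.last N) :
    ∃ S ∈ linExts (D.erase c) N, ∀ x, (S x).castSucc = T ⟨x, mem_of_mem_erase x.2⟩ := by
  obtain ⟨hinj, hmono⟩ := mem_linExts.1 hT
  have hne (x : D.erase c) : T ⟨x, mem_of_mem_erase x.2⟩ ≠ Fin.last N := fun h =>
    ne_of_mem_erase x.2 (congrArg Subtype.val (hinj (h.trans hlast.symm)))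
  refine ⟨fun x => (T ⟨x, mem_of_mem_erase x.2⟩).castPred (hne x), mem_linExts.2 ⟨?_, ?_⟩,
    fun x => Fin.castSucc_castPred _ (hne x)⟩
  · intro x y hxy
    exact Subtype.ext (congrArg Subtype.val (hinj (Fin.castPred_inj.1 hxy)) :)
  · exact fun x y hxy => Fin.castPred_lt_castPred_iff.2 (hmono hxy)

theorem extend_mem_linExts {D : Finset α} {N : ℕ} {c : α} (hc : Maximal (· ∈ D) c)
    {S : D.erase c → Fin N} (hS : S ∈ linExts (D.erase c) N) :
    ∃ T ∈ linExts D (N + 1), T ⟨c, hc.prop⟩ = Fin.last N ∧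
      ∀ x : D.erase c, T ⟨x, mem_of_mem_erase x.2⟩ = (S x).castSucc := by
  obtain ⟨hinj, hmono⟩ := mem_linExts.1 hS
  refine ⟨fun x => if h : (x : α) = c then Fin.last N else
    (S ⟨x, mem_erase.2 ⟨h, x.2⟩⟩).castSucc, mem_linExts.2 ⟨?_, ?_⟩, dif_pos rfl,
    fun x => dif_neg (ne_of_mem_erase x.2)⟩
  · intro x y hxy
    dsimp only at hxy
    split_ifs at hxy with hx hy hy
    · exact Subtype.ext (hx.trans hy.symm)
    · exact absurd hxy.symm (Fin.castSucc_lt_last _).ne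
    · exact absurd hxy (Fin.castSucc_lt_last _).ne
    · exact Subtype.ext (congrArg Subtype.val (hinj (Fin.castSucc_injective _ hxy)) :)
  · intro x y hxy
    have hx : (x : α) ≠ c := fun h => hc.not_gt y.2 (h ▸ hxy)
    simp only [dif_neg hx]
    split_ifs with hy
    · exact Fin.castSucc_lt_last _
    · exact Fin.castSucc_lt_castSucc_iff.2 (hmono hxy)

theorem card_linExts_filter_eq_last {D : Finset α} {N : ℕ} {c : α} (hc : Maximal (· ∈ D) c) :
    #{T ∈ linExts D (N + 1) | T ⟨c, hc.prop⟩ = Fin.last N} = #(linExts (D.erase c) N) := by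
  choose res hres hres' using fun T (hT : T ∈ (linExts D (N + 1)).filter
      fun T => T ⟨c, hc.prop⟩ = Fin.last N) =>
    restrict_mem_linExts hc.prop (mem_filter.1 hT).1 (mem_filter.1 hT).2
  refine card_bij res hres ?_ ?_
  · intro T hT T' hT' h
    ext x : 1
    by_cases hx : (x : α) = c
    · obtain rfl : x = ⟨c, hc.prop⟩ := Subtype.ext hx
      rw [(mem_filter.1 hT).2, (mem_filter.1 hT').2]
    · rw [← hres' T hT ⟨x, mem_erase.2 ⟨hx, x.2⟩⟩, h, hres' T' hT']
  · intro S hS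
    obtain ⟨T, hT, hlast, hTS⟩ := extend_mem_linExts hc hS
    refine ⟨T, mem_filter.2 ⟨hT, hlast⟩, funext fun x => Fin.castSucc_injective _ ?_⟩
    rw [hres' T, hTS]

theorem maximal_of_eq_last {D : Finset α} {N : ℕ} {T : D → Fin (N + 1)}
    (hT : T ∈ linExts D (N + 1)) {c : D} (hc : T c = Fin.last N) : Maximal (· ∈ D) (c : α) :=
  maximal_iff_forall_gt.2 ⟨c.2, fun y hy hyD =>
    (Fin.le_last (T ⟨y, hyD⟩)).not_gt (hc ▸ (mem_linExts.1 hT).2 hy)⟩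

theorem numLinExts_eq_sum_maximal {D : Finset α} (hD : D.Nonempty) :
    numLinExts D = ∑ c ∈ D with Maximal (· ∈ D) c, numLinExts (D.erase c) := by
  obtain ⟨N, hN⟩ : ∃ N, #D = N + 1 := Nat.exists_eq_succ_of_ne_zero hD.card_pos.ne'
  have hlast : ∀ T ∈ linExts D (N + 1), #{c | T c = Fin.last N} = 1 := fun T hT => by
    have hinj := (mem_linExts.1 hT).1
    obtain ⟨c, hc⟩ := hinj.surjective_of_finite (D.equivFinOfCardEq hN) (Fin.last N)
    exact card_eq_one.2 ⟨c, by ext; simp [← hc, hinj.eq_iff]⟩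
  have hfiber (c : D) : #{T ∈ linExts D (N + 1) | T c = Fin.last N} =
      if Maximal (· ∈ D) (c : α) then numLinExts (D.erase c) else 0 := by
    split_ifs with hc
    · rw [card_linExts_filter_eq_last hc, numLinExts, card_erase_of_mem c.2, hN,
        Nat.add_sub_cancel]
    · exact card_eq_zero.2 (filter_eq_empty_iff.2 fun T hT h => hc (maximal_of_eq_last hT h))
  calc numLinExts D = ∑ T ∈ linExts D (N + 1), #{c | T c = Fin.last N} := by
        rw [sum_congr rfl hlast, ← card_eq_sum_ones, numLinExts, hN]
    _ = ∑ c : D, #{T ∈ linExts D (N + 1) | T c = Fin.last N} :=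
        sum_card_bipartiteAbove_eq_sum_card_bipartiteBelow _
    _ = _ := by
        rw [sum_congr rfl fun c _ => hfiber c, sum_filter]
        exact sum_coe_sort D fun c => if Maximal (· ∈ D) c then numLinExts (D.erase c) else 0

/-- The lower subsets (order ideals) of the finite set `D` with its induced order. -/
def lowerSubsets (D : Finset α) : Finset (Finset α) :=
  D.powerset.filter fun I => ∀ x ∈ I, ∀ y ∈ D, y ≤ x → y ∈ I

theorem mem_lowerSubsets {D I : Finset α} :
    I ∈ lowerSubsets D ↔ I ⊆ D ∧ ∀ x ∈ I, ∀ y ∈ D, y ≤ x → y ∈ I := by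
  rw [lowerSubsets, mem_filter, mem_powerset]

theorem self_mem_lowerSubsets (D : Finset α) : D ∈ lowerSubsets D :=
  mem_lowerSubsets.2 ⟨Subset.rfl, fun _ _ _ hy _ => hy⟩

theorem lowerSubsets_maximal_sdiff_iff {D I : Finset α} {c : α} :
    (I ∈ (lowerSubsets D).erase D ∧ c ∈ {c ∈ D \ I | Maximal (· ∈ D \ I) c}) ↔
      I ∈ lowerSubsets (D.erase c) ∧ c ∈ {c ∈ D | Maximal (· ∈ D) c} := by
  simp only [mem_erase, mem_filter, mem_lowerSubsets]
  constructor
  · rintro ⟨⟨-, hID, hlow⟩, hcDI, hmax⟩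
    obtain ⟨hcD, hcI⟩ := mem_sdiff.1 hcDI
    refine ⟨⟨subset_erase.2 ⟨hID, hcI⟩, fun x hx y hy => hlow x hx y hy.2⟩,
      hcD, maximal_iff_forall_gt.2 ⟨hcD, fun y hcy hyD => ?_⟩⟩
    by_cases hyI : y ∈ I
    · exact hcI (hlow y hyI c hcD hcy.le)
    · exact hmax.not_gt (mem_sdiff.2 ⟨hyD, hyI⟩) hcy
  · rintro ⟨⟨hID, hlow⟩, hcD, hmax⟩
    obtain ⟨hID, hcI⟩ := subset_erase.1 hID
    have hcDI : c ∈ D \ I := mem_sdiff.2 ⟨hcD, hcI⟩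
    refine ⟨⟨fun h => hcI (h ▸ hcD), hID, fun x hx y hy hyx => ?_⟩, hcDI,
      maximal_iff_forall_gt.2 ⟨hcDI, fun y hcy hy => hmax.not_gt (mem_sdiff.1 hy).1 hcy⟩⟩
    by_cases hyc : y = c
    · exact hyc ▸ hmax.eq_of_le (hID hx) (hyc ▸ hyx) ▸ hx
    · exact hlow x hx y ⟨hyc, hy⟩ hyx

theorem sum_lowerSubsets_mul_numLinExts_sdiff (g : Finset α → ℕ) (D : Finset α) :
    ∑ I ∈ lowerSubsets D, g I * numLinExts (D \ I) =
      g D + ∑ c ∈ D with Maximal (· ∈ D) c,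
        ∑ I ∈ lowerSubsets (D.erase c), g I * numLinExts (D.erase c \ I) := by
  have hrec : ∀ I ∈ (lowerSubsets D).erase D, g I * numLinExts (D \ I) =
      ∑ c ∈ D \ I with Maximal (· ∈ D \ I) c, g I * numLinExts (D.erase c \ I) := by
    intro I hI
    obtain ⟨hne, hI⟩ := mem_erase.1 hI
    have hDI : (D \ I).Nonempty :=
      sdiff_nonempty.2 fun h => hne ((mem_lowerSubsets.1 hI).1.antisymm h)
    simp_rw [numLinExts_eq_sum_maximal hDI, mul_sum, erase_sdiff_comm]
  rw [← add_sum_erase _ _ (self_mem_lowerSubsets D), sdiff_self, bot_eq_empty, numLinExts_empty,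
    mul_one, sum_congr rfl hrec, sum_comm' fun _ _ => lowerSubsets_maximal_sdiff_iff]

theorem numLinExts_eq_sum_lowerSubsets_card {D : Finset α} {t : ℕ} (ht : t ≤ #D) :
    numLinExts D = ∑ I ∈ lowerSubsets D with #I = t, numLinExts I * numLinExts (D \ I) := by
  induction D using Finset.strongInduction with | H D ih => ?_
  have hrec := sum_lowerSubsets_mul_numLinExts_sdiff (fun I => if #I = t then numLinExts I else 0) D
  simp only [ite_mul, zero_mul, ← sum_filter] at hrec
  rw [hrec]
  rcases ht.eq_or_lt with rfl | hlt
  · rw [if_pos rfl, sum_eq_zero, add_zero]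
    intro c hc
    rw [filter_false_of_mem, sum_empty]
    exact fun I hI => ((card_le_card (mem_lowerSubsets.1 hI).1).trans_lt
      (card_erase_lt_of_mem (mem_filter.1 hc).1)).ne
  · rw [if_neg hlt.ne', zero_add, numLinExts_eq_sum_maximal (card_pos.1 (pos_of_gt hlt))]
    refine sum_congr rfl fun c hc => ih _ (erase_ssubset (mem_filter.1 hc).1) ?_
    rw [card_erase_of_mem (mem_filter.1 hc).1]
    exact Nat.le_sub_one_of_lt hlt

theorem numLinExts_eq_sum_lowerSubsets_maximal {D : Finset α} {p : α} (hp : p ∈ D) :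
    numLinExts D = ∑ J ∈ lowerSubsets D with Maximal (· ∈ J) p,
      numLinExts (J.erase p) * numLinExts (D \ J) := by
  induction D using Finset.strongInduction with | H D ih => ?_
  have hrec := sum_lowerSubsets_mul_numLinExts_sdiff
    (fun J => if Maximal (· ∈ J) p then numLinExts (J.erase p) else 0) D
  simp only [ite_mul, zero_mul, ← sum_filter] at hrec
  have hterm : ∀ c ∈ {c ∈ D | Maximal (· ∈ D) c},
      ∑ J ∈ lowerSubsets (D.erase c) with Maximal (· ∈ J) p,
        numLinExts (J.erase p) * numLinExts (D.erase c \ J) =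
      if p = c then 0 else numLinExts (D.erase c) := by
    intro c hc
    split_ifs with hpc
    · rw [filter_false_of_mem, sum_empty]
      exact fun J hJ hmax => notMem_erase c D ((mem_lowerSubsets.1 hJ).1 (hpc ▸ hmax.prop))
    · exact (ih _ (erase_ssubset (mem_filter.1 hc).1) (mem_erase.2 ⟨hpc, hp⟩)).symm
  have hsplit (c : α) : numLinExts (D.erase c) =
      (if p = c then numLinExts (D.erase c) else 0) +
        if p = c then 0 else numLinExts (D.erase c) := by
    split_ifs <;> simp
  rw [hrec, sum_congr rfl hterm, numLinExts_eq_sum_maximal ⟨p, hp⟩,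
    sum_congr rfl fun c _ => hsplit c, sum_add_distrib, sum_ite_eq]
  simp only [mem_filter, hp, true_and]

theorem sum_lowerSubsets_card_mul (D : Finset α) (f : ℕ → ℕ) :
    ∑ I ∈ lowerSubsets D, f #I * (numLinExts I * numLinExts (D \ I)) =
      (∑ t ∈ range (#D + 1), f t) * numLinExts D := by
  have hmaps : ∀ I ∈ lowerSubsets D, #I ∈ range (#D + 1) := fun I hI =>
    mem_range_succ_iff.2 (card_le_card (mem_lowerSubsets.1 hI).1)
  rw [← sum_fiberwise_of_maps_to hmaps, sum_mul]
  refine sum_congr rfl fun t ht => ?_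
  rw [numLinExts_eq_sum_lowerSubsets_card (mem_range_succ_iff.1 ht), mul_sum]
  exact sum_congr rfl fun I hI => by rw [(mem_filter.1 hI).2]

end LinearExtensions

theorem sytCard_eq_numLinExts {D : Finset (ℕ × ℕ)}
    (hD : ∀ c ∈ D, ∀ c' ∈ D, c ≤ c' → (c'.1, c.2) ∈ D) : sytCard D = numLinExts D := by
  rw [sytCard, numLinExts, linExts]
  refine congrArg card (filter_congr fun T _ => ?_)
  rw [Fintype.bijective_iff_injective_and_card, Fintype.card_coe, Fintype.card_fin,
    and_iff_left rfl]
  refine and_congr_right fun hinj => ⟨fun h c c' hcc => ?_, fun h c c' =>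
    ⟨fun h1 h2 => h (Prod.lt_iff.2 (Or.inr ⟨h1.le, h2⟩)),
      fun h2 h1 => h (Prod.lt_iff.2 (Or.inl ⟨h1, h2.le⟩))⟩⟩
  let d : D := ⟨((c' : ℕ × ℕ).1, (c : ℕ × ℕ).2), hD c c.2 c' c'.2 hcc.le⟩
  have hcd : T c ≤ T d := by
    rcases (Prod.le_def.1 hcc.le).1.eq_or_lt with h1 | h1
    · rw [show c = d from Subtype.ext (Prod.ext h1 rfl)]
    · exact ((h c d).2 rfl h1).le
  have hdc : T d ≤ T c' := by
    rcases (Prod.le_def.1 hcc.le).2.eq_or_lt with h2 | h2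
    · rw [show d = c' from Subtype.ext (Prod.ext rfl h2)]
    · exact ((h d c').1 rfl h2).le
  exact (hcd.trans hdc).lt_of_ne (hinj.ne hcc.ne)

theorem sytCard_range_product (p q : ℕ) :
    sytCard (range q ×ˢ range p) = numLinExts (range q ×ˢ range p) :=
  sytCard_eq_numLinExts fun _ hc _ hc' _ =>
    mem_product.2 ⟨(mem_product.1 hc').1, (mem_product.1 hc).2⟩

section Vandermonde

theorem mul_eval_descPochhammer_sub_one {R : Type*} [CommRing R] (n : ℕ) (x : R) :
    x * (descPochhammer R n).eval (x - 1) = (x - n) * (descPochhammer R n).eval x := by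
  have hleft := congrArg (Polynomial.eval x) (descPochhammer_succ_left R n)
  have hright := congrArg (Polynomial.eval x) (descPochhammer_succ_right R n)
  simp only [Polynomial.eval_mul, Polynomial.eval_comp, Polynomial.eval_sub, Polynomial.eval_X,
    Polynomial.eval_one, Polynomial.eval_natCast] at hleft hright
  rw [← hleft, hright, mul_comm]

variable {R : Type*} [CommRing R] [IsDomain R] {a : ℕ}

theorem det_vandermonde_eq_sum_descPochhammer (v : Fin a → R) :
    (Matrix.vandermonde v).det = ∑ σ : Equiv.Perm (Fin a), ((Equiv.Perm.sign σ : ℤ) : R) *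
      ∏ i, (descPochhammer R (σ i : ℕ)).eval (v i) := by
  rw [Matrix.det_eval_matrixOfPolynomials_eq_det_vandermonde v (fun j => descPochhammer R j)
    (fun i => descPochhammer_natDegree R i) (fun i => monic_descPochhammer R i),
    ← Matrix.det_transpose, Matrix.det_apply']
  rfl

-- After expanding in falling factorials, the `i`-th summand is the determinant with its term of `σ`
-- multiplied by `v i - σ i`, and the sum of these factors over `i` does not depend on `σ`.
theorem sum_mul_det_vandermonde_update_sub_one (v : Fin a → R) :
    ∑ i, v i * (Matrix.vandermonde (Function.update v i (v i - 1))).det =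
      (∑ i, (v i - (i : ℕ))) * (Matrix.vandermonde v).det := by
  have hterm (σ : Equiv.Perm (Fin a)) (i : Fin a) :
      v i * ∏ l, (descPochhammer R (σ l : ℕ)).eval (Function.update v i (v i - 1) l) =
        (v i - (σ i : ℕ)) * ∏ l, (descPochhammer R (σ l : ℕ)).eval (v l) := by
    rw [← mul_prod_erase _ _ (mem_univ i), ← mul_prod_erase _ _ (mem_univ i),
      Function.update_self, ← mul_assoc, mul_eval_descPochhammer_sub_one, mul_assoc]
    congr 2
    exact prod_congr rfl fun l hl => by rw [Function.update_of_ne (ne_of_mem_erase hl)]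
  have hsum (σ : Equiv.Perm (Fin a)) :
      ∑ i, (v i - ((σ i : ℕ) : R)) = ∑ i, (v i - ((i : ℕ) : R)) := by
    rw [sum_sub_distrib, sum_sub_distrib, Equiv.sum_comp σ fun i : Fin a => ((i : ℕ) : R)]
  simp_rw [det_vandermonde_eq_sum_descPochhammer, mul_sum, mul_left_comm (v _), hterm]
  rw [sum_comm]
  refine sum_congr rfl fun σ _ => ?_
  rw [← mul_sum, ← sum_mul, hsum, mul_left_comm]

end Vandermonde

section HeightDiagram

open scoped Nat

variable {a : ℕ}

/-- The diagram with `h j` cells in column `j`. Columns carry the reversed order of `Fin a`, so that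
for monotone `h` it is a Young diagram (with columns `a - 1, …, 1, 0` read left to right) and
`h j + j` is the `j`-th beta number of its conjugate. -/
def heightDiagram (h : Fin a → ℕ) : Finset ((Fin a)ᵒᵈ × ℕ) :=
  univ.biUnion fun j => (range (h (OrderDual.ofDual j))).map (Function.Embedding.sectR j ℕ)

theorem mem_heightDiagram {h : Fin a → ℕ} {j : (Fin a)ᵒᵈ} {i : ℕ} :
    (j, i) ∈ heightDiagram h ↔ i < h (OrderDual.ofDual j) := by
  simp [heightDiagram]

theorem card_heightDiagram (h : Fin a → ℕ) : #(heightDiagram h) = ∑ j, h j := by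
  rw [heightDiagram, card_biUnion]
  · simp only [card_map, card_range]
    exact Equiv.sum_comp OrderDual.ofDual h
  · intro j _ l _ hjl
    simp [disjoint_left, hjl.symm]

/-- The columns of the height diagram of `h` whose topmost cell is maximal in the diagram. -/
def cornerColumns (h : Fin a → ℕ) : Finset (Fin a) :=
  univ.filter fun j => 0 < h j ∧ ∀ l < j, h l < h j

theorem mem_cornerColumns {h : Fin a → ℕ} {j : Fin a} :
    j ∈ cornerColumns h ↔ 0 < h j ∧ ∀ l < j, h l < h j := by
  simp [cornerColumns]

theorem maximal_heightDiagram_iff {h : Fin a → ℕ} {j : Fin a} {i : ℕ} :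
    Maximal (· ∈ heightDiagram h) (OrderDual.toDual j, i) ↔
      j ∈ cornerColumns h ∧ i = h j - 1 := by
  rw [maximal_iff_forall_gt, mem_heightDiagram, OrderDual.ofDual_toDual, mem_cornerColumns]
  constructor
  · rintro ⟨hi, hmax⟩
    have htop : ¬ i + 1 < h j := fun hlt =>
      hmax (Prod.mk_lt_mk_iff_right.2 i.lt_succ_self) (mem_heightDiagram.2 hlt)
    have hleft : ∀ l < j, ¬ i < h l := fun l hl hil =>
      hmax (Prod.mk_lt_mk_iff_left.2 (OrderDual.toDual_lt_toDual.2 hl)) (mem_heightDiagram.2 hil)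
    exact ⟨⟨by omega, fun l hl => by have := hleft l hl; omega⟩, by omega⟩
  · rintro ⟨⟨hpos, hleft⟩, rfl⟩
    refine ⟨Nat.sub_one_lt hpos.ne', ?_⟩
    rintro ⟨l, q⟩ hlt hq
    obtain ⟨l, rfl⟩ := OrderDual.toDual.surjective l
    rw [mem_heightDiagram, OrderDual.ofDual_toDual] at hq
    rcases Prod.mk_lt_mk.1 hlt with ⟨hl, hjq⟩ | ⟨hl, hjq⟩
    · have := hleft l (OrderDual.toDual_lt_toDual.1 hl)
      omega
    · rcases (OrderDual.toDual_le_toDual.1 hl).eq_or_lt with rfl | hl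
      · omega
      · have := hleft l hl
        omega

theorem heightDiagram_erase {h : Fin a → ℕ} {j : Fin a} (hj : 0 < h j) :
    (heightDiagram h).erase (OrderDual.toDual j, h j - 1) =
      heightDiagram (Function.update h j (h j - 1)) := by
  ext ⟨l, q⟩
  obtain ⟨l, rfl⟩ := OrderDual.toDual.surjective l
  rcases eq_or_ne l j with rfl | hl
  · simp only [mem_erase, mem_heightDiagram, OrderDual.ofDual_toDual, Function.update_self, ne_eq,
      Prod.mk.injEq, true_and]
    omega
  · simp [mem_heightDiagram, hl]

theorem numLinExts_heightDiagram_eq_sum {h : Fin a → ℕ} (hne : (heightDiagram h).Nonempty) :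
    numLinExts (heightDiagram h) =
      ∑ j ∈ cornerColumns h, numLinExts (heightDiagram (Function.update h j (h j - 1))) := by
  rw [numLinExts_eq_sum_maximal hne]
  symm
  refine sum_bij (fun j _ => (OrderDual.toDual j, h j - 1)) ?_ ?_ ?_ ?_
  · intro j hj
    have hmax := maximal_heightDiagram_iff.2 ⟨hj, rfl⟩
    exact mem_filter.2 ⟨hmax.prop, hmax⟩
  · exact fun j _ l _ hjl => OrderDual.toDual.injective (congrArg Prod.fst hjl)
  · rintro ⟨j, i⟩ hc
    obtain ⟨hj, rfl⟩ := maximal_heightDiagram_iff.1 (mem_filter.1 hc).2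
    exact ⟨j, hj, rfl⟩
  · exact fun j hj => by rw [heightDiagram_erase (mem_cornerColumns.1 hj).1]

theorem monotone_update_sub_one {h : Fin a → ℕ} (hh : Monotone h) {j : Fin a}
    (hj : j ∈ cornerColumns h) : Monotone (Function.update h j (h j - 1)) := by
  intro l l' hl
  have hleft := (mem_cornerColumns.1 hj).2
  rcases eq_or_ne l' j with hl'j | hl'j
  · subst hl'j
    rcases hl.eq_or_lt with rfl | hlt
    · rfl
    · simpa [hlt.ne] using Nat.le_sub_one_of_lt (hleft l hlt)
  · rw [Function.update_of_ne hl'j]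
    exact (update_le_self_iff.2 (Nat.sub_le _ 1) l).trans (hh hl)

theorem mul_det_vandermonde_update_eq_zero {h : Fin a → ℕ} (hh : Monotone h) {j : Fin a}
    (hj : j ∉ cornerColumns h) :
    (h j + j : ℤ) * (Matrix.vandermonde
      (Function.update (fun l : Fin a => (h l + l : ℤ)) j (h j + j - 1))).det = 0 := by
  rcases Nat.eq_zero_or_pos (j : ℕ) with hj0 | hjpos
  · have hj' : h j = 0 := by
      by_contra hne
      exact hj (mem_cornerColumns.2 ⟨Nat.pos_of_ne_zero hne, fun l hl => by omega⟩)
    simp [hj0, hj']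
  · let l : Fin a := ⟨j - 1, by omega⟩
    have hlj : l < j := Fin.lt_def.2 (Nat.sub_one_lt hjpos.ne')
    have hlval : ((l : ℕ) : ℤ) = j - 1 := by push_cast [l, hjpos]; rfl
    have heq : h l = h j := by
      refine (hh hlj.le).antisymm (not_lt.1 fun hlt =>
        hj (mem_cornerColumns.2 ⟨pos_of_gt hlt, fun q hq => ?_⟩))
      exact (hh (Fin.le_def.2 (Nat.le_sub_one_of_lt hq))).trans_lt hlt
    rw [Matrix.det_vandermonde_eq_zero_iff.2 ⟨l, j, ?_, hlj.ne⟩, mul_zero]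
    rw [Function.update_self, Function.update_of_ne hlj.ne, heq, hlval, add_sub_assoc]

theorem sum_update_sub_one_add_one {h : Fin a → ℕ} {j : Fin a} (hj : 0 < h j) :
    ∑ l, Function.update h j (h j - 1) l + 1 = ∑ l, h l := by
  rw [sum_update_of_mem (mem_univ j),
    sum_eq_add_sum_sdiff_singleton_of_mem (mem_univ j) h]
  omega

theorem prod_factorial_update_sub_one {h : Fin a → ℕ} {j : Fin a} (hj : 0 < h j) :
    (h j + j) * ∏ l, (Function.update h j (h j - 1) l + l)! = ∏ l, (h l + l)! := by
  rw [← mul_prod_erase _ _ (mem_univ j), ← mul_prod_erase univ (fun l => (h l + l)!) (mem_univ j),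
    Function.update_self, ← mul_assoc, show h j - 1 + (j : ℕ) = h j + j - 1 by omega,
    Nat.mul_factorial_pred (by omega)]
  congr 1
  exact prod_congr rfl fun l hl => by rw [Function.update_of_ne (ne_of_mem_erase hl)]

theorem cast_update_sub_one_add {h : Fin a → ℕ} {j : Fin a} (hj : 0 < h j) :
    (fun l : Fin a => (Function.update h j (h j - 1) l + l : ℤ)) =
      Function.update (fun l => (h l + l : ℤ)) j (h j + j - 1) := by
  ext l
  rcases eq_or_ne l j with rfl | hl
  · rw [Function.update_self, Function.update_self, Nat.cast_pred hj]
    ring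
  · rw [Function.update_of_ne hl, Function.update_of_ne hl]

theorem det_vandermonde_natCast_fin (a : ℕ) :
    (Matrix.vandermonde fun j : Fin a => (j : ℤ)).det = ∏ j : Fin a, ((j : ℕ)! : ℤ) := by
  cases a with
  | zero => simp
  | succ n =>
    rw [Matrix.det_vandermonde_id_eq_superFactorial, ← Nat.prod_range_succ_factorial,
      ← Fin.prod_univ_eq_prod_range]
    push_cast
    rfl

theorem numLinExts_heightDiagram_mul_prod_factorial {h : Fin a → ℕ} (hh : Monotone h) :
    (numLinExts (heightDiagram h) * ∏ j, (h j + j)! : ℕ) =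
      ((∑ j, h j)! : ℤ) * (Matrix.vandermonde fun j => (h j + j : ℤ)).det := by
  induction hN : ∑ j, h j generalizing h with
  | zero =>
    have hzero : h = 0 := funext fun j => sum_eq_zero_iff.1 hN j (mem_univ j)
    have hempty : heightDiagram h = ∅ := card_eq_zero.1 ((card_heightDiagram h).trans hN)
    rw [hempty, numLinExts_empty]
    simp [hzero, det_vandermonde_natCast_fin]
  | succ N ih =>
    have hne : (heightDiagram h).Nonempty :=
      card_pos.1 (by rw [card_heightDiagram, hN]; exact N.succ_pos)
    have hcorner : ∀ j ∈ cornerColumns h,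
        ((numLinExts (heightDiagram (Function.update h j (h j - 1))) * ∏ l, (h l + l)! : ℕ) : ℤ) =
        N ! * ((h j + j) * (Matrix.vandermonde
          (Function.update (fun l : Fin a => (h l + l : ℤ)) j (h j + j - 1))).det) := by
      intro j hj
      have hpos := (mem_cornerColumns.1 hj).1
      have hrec := ih (monotone_update_sub_one hh hj)
        (Nat.succ.inj ((sum_update_sub_one_add_one hpos).trans hN))
      rw [cast_update_sub_one_add hpos] at hrec
      rw [← prod_factorial_update_sub_one hpos, mul_left_comm, Nat.cast_mul, hrec]
      push_cast
      ring
    have hsum : ∑ j : Fin a, ((h j + j : ℤ) - (j : ℕ)) = N + 1 := by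
      simp only [add_sub_cancel_right]
      exact_mod_cast hN
    rw [numLinExts_heightDiagram_eq_sum hne, sum_mul, Nat.cast_sum, sum_congr rfl hcorner,
      ← mul_sum, sum_subset (subset_univ _) fun j _ hj =>
        mul_det_vandermonde_update_eq_zero hh hj,
      sum_mul_det_vandermonde_update_sub_one, hsum, Nat.factorial_succ]
    push_cast
    ring

theorem numLinExts_heightDiagram_add {h : Fin a → ℕ} (hh : Monotone h) (k : ℕ) :
    numLinExts (heightDiagram fun j => h j + k) * (∏ j, (h j + j + k)!) * (∑ j, h j)! =
      numLinExts (heightDiagram h) * (∏ j, (h j + j)!) * (∑ j, h j + a * k)! := by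
  have hshift := numLinExts_heightDiagram_mul_prod_factorial
    (h := fun j => h j + k) fun i j hij => Nat.add_le_add_right (hh hij) k
  have hbase := numLinExts_heightDiagram_mul_prod_factorial hh
  have hdet : (Matrix.vandermonde fun j : Fin a => ((h j + k : ℕ) + j : ℤ)).det =
      (Matrix.vandermonde fun j => (h j + j : ℤ)).det := by
    rw [← Matrix.det_vandermonde_add (fun j : Fin a => (h j + j : ℤ)) k]
    simp only [Nat.cast_add, add_right_comm]
  have hsum : ∑ j, (h j + k) = ∑ j, h j + a * k := by simp [sum_add_distrib]
  rw [hdet, hsum] at hshift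
  simp_rw [add_right_comm _ k] at hshift
  zify
  push_cast at hshift hbase
  linear_combination (↑(∑ j, h j)! : ℤ) * hshift - (↑(∑ j, h j + a * k)! : ℤ) * hbase

end HeightDiagram

section YoungDiagramInBox

open scoped Nat

variable {a b : ℕ}

theorem bijOn_heightDiagram {D : Finset (ℕ × ℕ)} {h : Fin a → ℕ}
    (hD : ∀ i j, (i, j) ∈ D ↔ ∃ hj : j < a, i < h (Fin.rev ⟨j, hj⟩)) :
    Set.BijOn (fun c : (Fin a)ᵒᵈ × ℕ => (c.2, (Fin.rev (OrderDual.ofDual c.1) : ℕ)))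
      (heightDiagram h) D := by
  refine ⟨?_, ?_, ?_⟩
  · rintro ⟨j, i⟩ hc
    refine (hD _ _).2 ⟨Fin.is_lt _, ?_⟩
    rw [Fin.rev_rev]
    exact mem_heightDiagram.1 hc
  · rintro ⟨j, i⟩ - ⟨j', i'⟩ - heq
    obtain ⟨rfl, hj⟩ := Prod.mk.inj heq
    exact Prod.ext (Fin.rev_injective (Fin.ext hj)) rfl
  · rintro ⟨i, j⟩ hc
    obtain ⟨hj, hi⟩ := (hD i j).1 hc
    exact ⟨(OrderDual.toDual (Fin.rev ⟨j, hj⟩), i), mem_heightDiagram.2 hi, by simp⟩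

theorem numLinExts_eq_heightDiagram {D : Finset (ℕ × ℕ)} {h : Fin a → ℕ}
    (hD : ∀ i j, (i, j) ∈ D ↔ ∃ hj : j < a, i < h (Fin.rev ⟨j, hj⟩)) :
    numLinExts D = numLinExts (heightDiagram h) := by
  refine numLinExts_eq_of_bijOn (bijOn_heightDiagram hD) fun c _ c' _ => ?_
  simp only [Prod.lt_iff, Fin.val_fin_lt, Fin.val_fin_le, Fin.rev_lt_rev, Fin.rev_le_rev,
    OrderDual.ofDual_lt_ofDual, OrderDual.ofDual_le_ofDual]
  tauto

theorem bijOn_heightDiagram_anti {D : Finset (ℕ × ℕ)} {w : ℕ} {h : Fin b → ℕ}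
    (hw : ∀ i, h i ≤ w)
    (hD : ∀ i j, (i, j) ∈ D ↔ ∃ hi : i < b, j < w ∧ w ≤ j + h ⟨i, hi⟩) :
    Set.BijOn (fun c : (Fin b)ᵒᵈ × ℕ => (((OrderDual.ofDual c.1 : Fin b) : ℕ), w - 1 - c.2))
      (heightDiagram h) D := by
  refine ⟨?_, ?_, ?_⟩
  · rintro ⟨i, q⟩ hc
    have hq := mem_heightDiagram.1 hc
    have hle := hw (OrderDual.ofDual i)
    have hcell : w - 1 - q < w ∧ w ≤ w - 1 - q + h (OrderDual.ofDual i) := by omega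
    exact (hD _ _).2 ⟨Fin.is_lt _, hcell⟩
  · rintro ⟨i, q⟩ hc ⟨i', q'⟩ hc' heq
    obtain ⟨hi, hq⟩ := Prod.mk.inj heq
    obtain rfl : i = i' := Fin.ext hi
    have := mem_heightDiagram.1 hc
    have := mem_heightDiagram.1 hc'
    have := hw (OrderDual.ofDual i)
    exact Prod.ext rfl (by dsimp only at *; omega)
  · rintro ⟨i, j⟩ hc
    obtain ⟨hi, hj, hle⟩ := (hD i j).1 hc
    refine ⟨(OrderDual.toDual ⟨i, hi⟩, w - 1 - j), mem_heightDiagram.2 ?_, ?_⟩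
    · rw [OrderDual.ofDual_toDual]
      omega
    · exact Prod.ext rfl (by dsimp only; omega)

theorem numLinExts_eq_heightDiagram_anti {D : Finset (ℕ × ℕ)} {w : ℕ} {h : Fin b → ℕ}
    (hw : ∀ i, h i ≤ w)
    (hD : ∀ i j, (i, j) ∈ D ↔ ∃ hi : i < b, j < w ∧ w ≤ j + h ⟨i, hi⟩) :
    numLinExts D = numLinExts (heightDiagram h) := by
  refine numLinExts_eq_of_bijOn_of_anti (bijOn_heightDiagram_anti hw hD) ?_
  rintro ⟨i, q⟩ hc ⟨i', q'⟩ hc'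
  have := mem_heightDiagram.1 hc
  have := mem_heightDiagram.1 hc'
  have := hw (OrderDual.ofDual i)
  have := hw (OrderDual.ofDual i')
  have hq : w - 1 - q < w - 1 - q' ↔ q' < q := by omega
  have hq' : w - 1 - q ≤ w - 1 - q' ↔ q' ≤ q := by omega
  simp only [Prod.lt_iff, hq, hq', Fin.val_fin_lt, Fin.val_fin_le, OrderDual.ofDual_lt_ofDual,
    OrderDual.ofDual_le_ofDual]

variable {μ : YoungDiagram}

theorem fst_lt_of_mem (hμ : μ.cells ⊆ range b ×ˢ range a) {i j : ℕ} (h : (i, j) ∈ μ) : i < b :=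
  mem_range.1 (mem_product.1 (hμ h)).1

theorem snd_lt_of_mem (hμ : μ.cells ⊆ range b ×ˢ range a) {i j : ℕ} (h : (i, j) ∈ μ) : j < a :=
  mem_range.1 (mem_product.1 (hμ h)).2

theorem colLen_le (hμ : μ.cells ⊆ range b ×ˢ range a) (j : ℕ) : μ.colLen j ≤ b :=
  le_of_forall_lt fun _ hi => fst_lt_of_mem hμ (YoungDiagram.mem_iff_lt_colLen.2 hi)

theorem rowLen_le (hμ : μ.cells ⊆ range b ×ˢ range a) (i : ℕ) : μ.rowLen i ≤ a :=
  le_of_forall_lt fun _ hj => snd_lt_of_mem hμ (YoungDiagram.mem_iff_lt_rowLen.2 hj)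

theorem monotone_colLen_rev (μ : YoungDiagram) :
    Monotone fun j : Fin a => μ.colLen (Fin.rev j) := fun _ _ hjl =>
  μ.colLen_anti _ _ (Fin.rev_le_rev.2 hjl)

theorem monotone_sub_rowLen (μ : YoungDiagram) (a : ℕ) :
    Monotone fun i : Fin b => a - μ.rowLen i := fun _ _ hil =>
  Nat.sub_le_sub_left (μ.rowLen_anti _ _ hil) a

theorem strictMono_add_val {n : ℕ} {h : Fin n → ℕ} (hh : Monotone h) :
    StrictMono fun j => h j + j := fun _ _ hjl => Nat.add_lt_add_of_le_of_lt (hh hjl.le) hjl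

/-- The beta numbers of the conjugate of `μ`, followed by those of the complement of `μ`
in the box with `b` rows and `a` columns. -/
def betaNumber (μ : YoungDiagram) : Fin a ⊕ Fin b → ℕ :=
  Sum.elim (fun j => μ.colLen (Fin.rev j) + j) fun i => a - μ.rowLen i + i

theorem betaNumber_injective (hμ : μ.cells ⊆ range b ×ˢ range a) :
    Function.Injective (betaNumber μ : Fin a ⊕ Fin b → ℕ) := by
  refine (strictMono_add_val (monotone_colLen_rev μ)).injective.sumElim
    (strictMono_add_val (monotone_sub_rowLen μ a)).injective fun j i heq => ?_
  have hrev := Fin.val_rev j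
  have hrow := rowLen_le hμ i
  have hmem : (i : ℕ) < μ.colLen (Fin.rev j) ↔ (Fin.rev j : ℕ) < μ.rowLen i :=
    YoungDiagram.mem_iff_lt_colLen.symm.trans YoungDiagram.mem_iff_lt_rowLen
  omega

theorem betaNumber_lt (hμ : μ.cells ⊆ range b ×ˢ range a) (x : Fin a ⊕ Fin b) :
    betaNumber μ x < a + b := by
  rcases x with j | i
  · have := colLen_le hμ (Fin.rev j)
    simp only [betaNumber, Sum.elim_inl]
    omega
  · simp only [betaNumber, Sum.elim_inr]
    omega

theorem prod_betaNumber {M : Type*} [CommMonoid M] (hμ : μ.cells ⊆ range b ×ˢ range a)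
    (g : ℕ → M) :
    (∏ j : Fin a, g (μ.colLen (Fin.rev j) + j)) * ∏ i : Fin b, g (a - μ.rowLen i + i) =
      ∏ s ∈ range (a + b), g s := by
  have himage : univ.image (betaNumber μ : Fin a ⊕ Fin b → ℕ) = range (a + b) := by
    refine eq_of_subset_of_card_le (image_subset_iff.2 fun x _ =>
      mem_range.2 (betaNumber_lt hμ x)) ?_
    simp [card_image_of_injective _ (betaNumber_injective hμ)]
  rw [← himage, prod_image fun x _ y _ h => betaNumber_injective hμ h, Fintype.prod_sum_type]
  rfl

/-- Translation of cells by `k` rows downwards. -/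
def shiftDown (k : ℕ) : ℕ × ℕ ↪ ℕ × ℕ :=
  (addRightEmbedding k).prodMap (Function.Embedding.refl ℕ)

theorem mk_mem_map_shiftDown {k i j : ℕ} {D : Finset (ℕ × ℕ)} :
    (i, j) ∈ D.map (shiftDown k) ↔ k ≤ i ∧ (i - k, j) ∈ D := by
  simp only [mem_map, shiftDown, Function.Embedding.coe_prodMap, Prod.exists, Prod.map,
    addRightEmbedding_apply, Function.Embedding.refl_apply, Prod.mk.injEq]
  constructor
  · rintro ⟨i, j, h, rfl, rfl⟩
    simpa using h
  · exact fun ⟨hk, h⟩ => ⟨i - k, j, h, Nat.sub_add_cancel hk, rfl⟩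

theorem numLinExts_map_shiftDown (k : ℕ) (D : Finset (ℕ × ℕ)) :
    numLinExts (D.map (shiftDown k)) = numLinExts D := by
  refine numLinExts_eq_of_bijOn (f := shiftDown k) ?_ fun x _ y _ => ?_
  · rw [coe_map]
    exact ((shiftDown k).injective.injOn).bijOn_image
  · simp [shiftDown, Prod.lt_iff]

/-- The diagram `D` moved down by `k` rows, below `k` full rows of length `a`. -/
def prependRows (a k : ℕ) (D : Finset (ℕ × ℕ)) : Finset (ℕ × ℕ) :=
  range k ×ˢ range a ∪ D.map (shiftDown k)

theorem mk_mem_prependRows {k i j : ℕ} {D : Finset (ℕ × ℕ)} :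
    (i, j) ∈ prependRows a k D ↔ i < k ∧ j < a ∨ k ≤ i ∧ (i - k, j) ∈ D := by
  rw [prependRows, mem_union, mem_product, mem_range, mem_range, mk_mem_map_shiftDown]

theorem mk_mem_prependRows_cells (hμ : μ.cells ⊆ range b ×ˢ range a) (k : ℕ) (i j : ℕ) :
    (i, j) ∈ prependRows a k μ.cells ↔
      ∃ hj : j < a, i < μ.colLen (Fin.rev (Fin.rev ⟨j, hj⟩)) + k := by
  have hcol : (i - k, j) ∈ μ.cells ↔ i - k < μ.colLen j :=
    (YoungDiagram.mem_cells _).trans YoungDiagram.mem_iff_lt_colLen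
  have hlt : i - k < μ.colLen j → j < a := fun h => snd_lt_of_mem hμ (hcol.2 h)
  simp only [mk_mem_prependRows, hcol, Fin.rev_rev, exists_prop]
  omega

theorem mk_mem_box_sdiff_cells (hμ : μ.cells ⊆ range b ×ˢ range a) (k : ℕ) (i j : ℕ) :
    (i, j) ∈ (range b ×ˢ range (a + k)) \ μ.cells ↔
      ∃ _ : i < b, j < a + k ∧ a + k ≤ j + (a - μ.rowLen i + k) := by
  have hrow := rowLen_le hμ i
  rw [mem_sdiff, mem_product, mem_range, mem_range, YoungDiagram.mem_cells,
    YoungDiagram.mem_iff_lt_rowLen, exists_prop]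
  omega

theorem prependRows_zero (a : ℕ) (D : Finset (ℕ × ℕ)) : prependRows a 0 D = D := by
  ext ⟨i, j⟩
  simp [mk_mem_prependRows]

theorem sum_colLen_rev (hμ : μ.cells ⊆ range b ×ˢ range a) :
    ∑ j : Fin a, μ.colLen (Fin.rev j) = #μ.cells := by
  have hD := mk_mem_prependRows_cells hμ 0
  rw [prependRows_zero] at hD
  rw [← card_heightDiagram]
  exact mod_cast (bijOn_heightDiagram hD).finsetCard_eq

theorem sum_sub_rowLen (hμ : μ.cells ⊆ range b ×ˢ range a) :
    ∑ i : Fin b, (a - μ.rowLen i) = a * b - #μ.cells := by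
  rw [← card_heightDiagram, (bijOn_heightDiagram_anti (fun _ => Nat.sub_le _ _)
    (mk_mem_box_sdiff_cells hμ 0)).finsetCard_eq, add_zero, card_sdiff_of_subset hμ]
  simp [mul_comm]

theorem numLinExts_prependRows_cells (hμ : μ.cells ⊆ range b ×ˢ range a) (k : ℕ) :
    numLinExts (prependRows a k μ.cells) * (∏ j : Fin a, (μ.colLen (Fin.rev j) + j + k)!) *
        (#μ.cells)! =
      numLinExts μ.cells * (∏ j : Fin a, (μ.colLen (Fin.rev j) + j)!) * (#μ.cells + a * k)! := by
  have hD := mk_mem_prependRows_cells hμ 0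
  have hshift := numLinExts_heightDiagram_add (monotone_colLen_rev (a := a) μ) k
  rwa [← numLinExts_eq_heightDiagram (mk_mem_prependRows_cells hμ k),
    ← numLinExts_eq_heightDiagram (h := fun j => μ.colLen (Fin.rev j)) hD, prependRows_zero,
    sum_colLen_rev hμ] at hshift

theorem numLinExts_box_sdiff_cells (hμ : μ.cells ⊆ range b ×ˢ range a) (k : ℕ) :
    numLinExts ((range b ×ˢ range (a + k)) \ μ.cells) *
        (∏ i : Fin b, (a - μ.rowLen i + i + k)!) * (a * b - #μ.cells)! =
      numLinExts ((range b ×ˢ range a) \ μ.cells) *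
        (∏ i : Fin b, (a - μ.rowLen i + i)!) * (a * b - #μ.cells + b * k)! := by
  have hshift := numLinExts_heightDiagram_add (monotone_sub_rowLen (b := b) μ a) k
  rwa [← numLinExts_eq_heightDiagram_anti
      (fun i => Nat.add_le_add_right (Nat.sub_le a (μ.rowLen i)) k) (mk_mem_box_sdiff_cells hμ k),
    ← numLinExts_eq_heightDiagram_anti
      (fun i => Nat.sub_le a (μ.rowLen i)) (mk_mem_box_sdiff_cells hμ 0),
    sum_sub_rowLen hμ] at hshift

theorem numLinExts_prependRows_mul_box_sdiff (hμ : μ.cells ⊆ range b ×ˢ range a) (k : ℕ) :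
    numLinExts (prependRows a k μ.cells) * numLinExts ((range b ×ˢ range (a + k)) \ μ.cells) *
        ∏ s ∈ range (a + b), (s + k)! =
      (∏ s ∈ range (a + b), s !) * (a * k)! * (b * k)! *
        (((a * k + #μ.cells).choose (a * k) *
            (b * k + (a * b - #μ.cells)).choose (b * k)) *
          (numLinExts μ.cells * numLinExts ((range b ×ˢ range a) \ μ.cells))) := by
  have hrows := numLinExts_prependRows_cells hμ k
  have hbox := numLinExts_box_sdiff_cells hμ k
  rw [add_comm #μ.cells, ← Nat.add_choose_mul_factorial_mul_factorial,
    ← Nat.choose_symm_add] at hrows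
  rw [add_comm (a * b - _), ← Nat.add_choose_mul_factorial_mul_factorial,
    ← Nat.choose_symm_add] at hbox
  rw [← prod_betaNumber hμ, ← prod_betaNumber hμ]
  refine Nat.eq_of_mul_eq_mul_right (Nat.mul_pos (#μ.cells).factorial_pos
    (a * b - #μ.cells).factorial_pos) ?_
  linear_combination congrArg₂ (· * ·) hrows hbox

theorem exists_youngDiagram_of_mem_lowerSubsets {I : Finset (ℕ × ℕ)}
    (hI : I ∈ lowerSubsets (range b ×ˢ range a)) : ∃ μ : YoungDiagram, μ.cells = I := by
  obtain ⟨hsub, hlow⟩ := mem_lowerSubsets.1 hI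
  refine ⟨⟨I, fun x y hyx hx => hlow x hx y ?_ hyx⟩, rfl⟩
  have hx' := mem_product.1 (hsub hx)
  exact mem_product.2 ⟨mem_range.2 (hyx.1.trans_lt (mem_range.1 hx'.1)),
    mem_range.2 (hyx.2.trans_lt (mem_range.1 hx'.2))⟩

theorem prod_range_factorial_add_mul (n k : ℕ) :
    (∏ s ∈ range n, (s + k)!) * ∏ s ∈ range k, s ! = ∏ s ∈ range (n + k), s ! := by
  rw [add_comm n k, prod_range_add, mul_comm]
  simp_rw [add_comm k]

theorem prependRows_empty (a k : ℕ) : prependRows a k ∅ = range k ×ˢ range a := by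
  rw [prependRows, map_empty, union_empty]

theorem numLinExts_rectangle (p q : ℕ) :
    numLinExts (range q ×ˢ range p) * ∏ s ∈ range (p + q), s ! =
      (p * q)! * (∏ s ∈ range p, s !) * ∏ s ∈ range q, s ! := by
  have hbot : (⊥ : YoungDiagram).cells ⊆ range 0 ×ˢ range p := empty_subset _
  have hcol (j : ℕ) : (⊥ : YoungDiagram).colLen j = 0 := Nat.le_zero.1 (colLen_le hbot j)
  have hrows := numLinExts_prependRows_cells hbot q
  simp only [YoungDiagram.cells_bot, prependRows_empty, numLinExts_empty, hcol, zero_add,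
    card_empty, Nat.factorial_zero, mul_one, one_mul, Fin.prod_univ_eq_prod_range (· !),
    Fin.prod_univ_eq_prod_range fun s => (s + q)!] at hrows
  rw [← prod_range_factorial_add_mul, ← mul_assoc, hrows, mul_comm (p * q)!]

theorem sum_range_choose_mul_choose (p q N : ℕ) :
    ∑ t ∈ range (N + 1), (p + t).choose p * (q + (N - t)).choose q = (p + q + 1 + N).choose N := by
  have hpow : (PowerSeries.mk 1 : PowerSeries ℤ) ^ (p + 1) * PowerSeries.mk 1 ^ (q + 1) =
      PowerSeries.mk 1 ^ (p + q + 1 + 1) := by ring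
  have hcoeff := congrArg (PowerSeries.coeff N) hpow
  rw [PowerSeries.mk_one_pow_eq_mk_choose_add, PowerSeries.mk_one_pow_eq_mk_choose_add,
    PowerSeries.mk_one_pow_eq_mk_choose_add, PowerSeries.coeff_mul] at hcoeff
  simp only [PowerSeries.coeff_mk] at hcoeff
  rw [← Nat.choose_symm_add, ← Finset.Nat.sum_antidiagonal_eq_sum_range_succ
    fun t u => (p + t).choose p * (q + u).choose q]
  exact_mod_cast hcoeff

end YoungDiagramInBox

section TruncatedRectangle

open scoped Nat

variable {a b k : ℕ} {ν J : Finset (ℕ × ℕ)}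

/-- The rectangle with `k + b` rows and `a + k` columns, without its upper right `k × k` square
except for the lower left cell `(k - 1, a)` of that square. -/
def truncatedRect (a b k : ℕ) : Finset (ℕ × ℕ) :=
  (range (k + b) ×ˢ range (a + k)).filter fun c =>
    ¬((c.1 + 1 < k ∧ a ≤ c.2) ∨ (c.1 + 1 = k ∧ a + 1 ≤ c.2))

theorem mk_mem_truncatedRect {i j : ℕ} :
    (i, j) ∈ truncatedRect a b k ↔ (i < k + b ∧ j < a + k) ∧
      ¬((i + 1 < k ∧ a ≤ j) ∨ (i + 1 = k ∧ a + 1 ≤ j)) := by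
  rw [truncatedRect, mem_filter, mem_product, mem_range, mem_range]

theorem mk_mem_truncatedRect_of_le {i j i' j' : ℕ} (hc : (i, j) ∈ truncatedRect a b k)
    (hc' : (i', j') ∈ truncatedRect a b k) (hj : j ≤ j') : (i', j) ∈ truncatedRect a b k := by
  rw [mk_mem_truncatedRect] at hc hc' ⊢
  omega

theorem pivot_notMem_prependRows (hk : 0 < k) : (k - 1, a) ∉ prependRows a k ν := by
  rw [mk_mem_prependRows]
  omega

theorem truncatedRect_sdiff_insert_prependRows (hk : 0 < k) :
    truncatedRect a b k \ insert (k - 1, a) (prependRows a k ν) =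
      ((range b ×ˢ range (a + k)) \ ν).map (shiftDown k) := by
  ext ⟨i, j⟩
  simp only [mem_sdiff, mk_mem_truncatedRect, mem_insert, Prod.mk.injEq, mk_mem_prependRows,
    mk_mem_map_shiftDown, mem_product, mem_range]
  grind

theorem mk_mem_of_mem_lowerSubsets_box {i j i' j' : ℕ}
    (hν : ν ∈ lowerSubsets (range b ×ˢ range a)) (h : (i, j) ∈ ν) (hi : i' ≤ i) (hj : j' ≤ j) :
    (i', j') ∈ ν := by
  obtain ⟨μ, rfl⟩ := exists_youngDiagram_of_mem_lowerSubsets hν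
  exact μ.up_left_mem hi hj h

theorem insert_prependRows_mem_lowerSubsets (hk : 0 < k)
    (hν : ν ∈ lowerSubsets (range b ×ˢ range a)) :
    insert (k - 1, a) (prependRows a k ν) ∈ lowerSubsets (truncatedRect a b k) := by
  have hbox {i j : ℕ} (h : (i, j) ∈ ν) : i < b ∧ j < a := by
    simpa only [mem_product, mem_range] using (mem_lowerSubsets.1 hν).1 h
  refine mem_lowerSubsets.2 ⟨?_, ?_⟩
  · rintro ⟨i, j⟩ hc
    simp only [mem_insert, Prod.mk.injEq, mk_mem_prependRows] at hc
    rw [mk_mem_truncatedRect]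
    rcases hc with hc | hc | ⟨hi, hc⟩
    · omega
    · omega
    · have := hbox hc
      omega
  · rintro ⟨i, j⟩ hc ⟨i', j'⟩ hc' ⟨hi, hj⟩
    simp only [mem_insert, Prod.mk.injEq, mk_mem_prependRows] at hc ⊢
    rw [mk_mem_truncatedRect] at hc'
    dsimp only at hi hj
    rcases hc with hc | hc | ⟨_, hc⟩
    · omega
    · omega
    · have := hbox hc
      by_cases hik' : i' < k
      · omega
      · exact .inr (.inr ⟨not_lt.1 hik',
          mk_mem_of_mem_lowerSubsets_box hν hc (Nat.sub_le_sub_right hi k) hj⟩)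

theorem maximal_insert_prependRows (hν : ν ⊆ range b ×ˢ range a) :
    Maximal (· ∈ insert (k - 1, a) (prependRows a k ν)) (k - 1, a) := by
  refine ⟨mem_insert_self _ _, ?_⟩
  rintro ⟨i, j⟩ hc ⟨_, hj⟩
  rcases mem_insert.1 hc with hc | hc
  · exact hc.le
  · have hja : j < a := by
      rcases mk_mem_prependRows.1 hc with h | h
      · exact h.2
      · exact mem_range.1 (mem_product.1 (hν h.2)).2
    exact absurd hj hja.not_ge

theorem exists_eq_insert_prependRows (hk : 0 < k) (hJ : J ∈ lowerSubsets (truncatedRect a b k))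
    (hmax : Maximal (· ∈ J) (k - 1, a)) :
    ∃ ν ∈ lowerSubsets (range b ×ˢ range a), insert (k - 1, a) (prependRows a k ν) = J := by
  obtain ⟨hsub, hlow⟩ := mem_lowerSubsets.1 hJ
  have hrows {i j : ℕ} (hi : i < k) (hj : j < a) : (i, j) ∈ J :=
    hlow _ hmax.prop _ (mk_mem_truncatedRect.2 (by omega)) ⟨Nat.le_sub_one_of_lt hi, hj.le⟩
  have hcol {i j : ℕ} (h : (i, j) ∈ J) (hne : (i, j) ≠ (k - 1, a)) : j < a := by
    by_contra! hj
    have hc := mk_mem_truncatedRect.1 (hsub h)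
    exact hne (hmax.eq_of_le h ⟨by dsimp only; omega, hj⟩).symm
  refine ⟨{c ∈ range b ×ˢ range a | (c.1 + k, c.2) ∈ J}, mem_lowerSubsets.2
    ⟨filter_subset _ _, ?_⟩, ?_⟩
  · rintro ⟨i, j⟩ hc ⟨i', j'⟩ hc' ⟨hi, hj⟩
    simp only [mem_filter, mem_product, mem_range] at hc hc' ⊢
    exact ⟨hc', hlow _ hc.2 _ (mk_mem_truncatedRect.2 (by omega)) ⟨Nat.add_le_add_right hi k, hj⟩⟩
  · ext ⟨i, j⟩
    simp only [mem_insert, mk_mem_prependRows, mem_filter, mem_product, mem_range]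
    constructor
    · rintro (h | ⟨hi, hj⟩ | ⟨hi, _, h⟩)
      · exact h ▸ hmax.prop
      · exact hrows hi hj
      · rwa [Nat.sub_add_cancel hi] at h
    · intro h
      by_cases hne : (i, j) = (k - 1, a)
      · exact .inl hne
      · have hj := hcol h hne
        have hi := (mk_mem_truncatedRect.1 (hsub h)).1.1
        by_cases hik : i < k
        · exact .inr (.inl ⟨hik, hj⟩)
        · have hik := not_lt.1 hik
          exact .inr (.inr ⟨hik, ⟨by omega, hj⟩, by rwa [Nat.sub_add_cancel hik]⟩)

theorem lowerSubsets_truncatedRect_maximal (hk : 0 < k) :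
    {J ∈ lowerSubsets (truncatedRect a b k) | Maximal (· ∈ J) (k - 1, a)} =
      (lowerSubsets (range b ×ˢ range a)).image
        fun ν => insert (k - 1, a) (prependRows a k ν) := by
  ext J
  simp only [mem_filter, mem_image]
  constructor
  · exact fun ⟨hJ, hmax⟩ => exists_eq_insert_prependRows hk hJ hmax
  · rintro ⟨ν, hν, rfl⟩
    exact ⟨insert_prependRows_mem_lowerSubsets hk hν,
      maximal_insert_prependRows (mem_lowerSubsets.1 hν).1⟩

theorem insert_prependRows_injective (hk : 0 < k) :
    Function.Injective fun ν => insert (k - 1, a) (prependRows a k ν) := by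
  have hmem (ν : Finset (ℕ × ℕ)) (i j : ℕ) :
      (i + k, j) ∈ insert (k - 1, a) (prependRows a k ν) ↔ (i, j) ∈ ν := by
    simp only [mem_insert, Prod.mk.injEq, mk_mem_prependRows, Nat.add_sub_cancel]
    grind
  rintro ν ν' (h : insert _ _ = insert _ _)
  ext ⟨i, j⟩
  rw [← hmem ν, h, hmem]

theorem numLinExts_truncatedRect_eq_sum (hk : 0 < k) :
    numLinExts (truncatedRect a b k) = ∑ ν ∈ lowerSubsets (range b ×ˢ range a),
      numLinExts (prependRows a k ν) * numLinExts ((range b ×ˢ range (a + k)) \ ν) := by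
  have hpivot : (k - 1, a) ∈ truncatedRect a b k := mk_mem_truncatedRect.2 (by omega)
  rw [numLinExts_eq_sum_lowerSubsets_maximal hpivot, lowerSubsets_truncatedRect_maximal hk,
    sum_image (insert_prependRows_injective hk).injOn]
  refine sum_congr rfl fun ν _ => ?_
  rw [erase_insert (pivot_notMem_prependRows hk), truncatedRect_sdiff_insert_prependRows hk,
    numLinExts_map_shiftDown]

theorem numLinExts_truncatedRect_mul_prod_factorial (a b : ℕ) (hk : 0 < k) :
    numLinExts (truncatedRect a b k) * ∏ s ∈ range (a + b), (s + k)! =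
      (∏ s ∈ range (a + b), s !) * (a * k)! * (b * k)! *
        ((a * k + b * k + 1 + a * b).choose (a * b) * numLinExts (range b ×ˢ range a)) := by
  have hcard : #(range b ×ˢ range a) = a * b := by
    rw [card_product, card_range, card_range, mul_comm]
  rw [← sum_range_choose_mul_choose, ← hcard, ← sum_lowerSubsets_card_mul, mul_sum,
    numLinExts_truncatedRect_eq_sum hk, sum_mul]
  refine sum_congr rfl fun ν hν => ?_
  obtain ⟨μ, rfl⟩ := exists_youngDiagram_of_mem_lowerSubsets hν
  rw [hcard]
  exact numLinExts_prependRows_mul_box_sdiff (mem_lowerSubsets.1 hν).1 k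

theorem numLinExts_truncatedRect_mul_choose_mul (a b : ℕ) (hk : 0 < k) :
    numLinExts (truncatedRect a b k) * (a * k + (b * k + 1)).choose (a * k) *
        ((b * k + 1)! * ∏ s ∈ range (a + b), (s + k)!) =
      (a * b + (a * k + (b * k + 1)))! * (b * k)! *
        ((∏ s ∈ range a, s !) * ∏ s ∈ range b, s !) := by
  have hD := numLinExts_truncatedRect_mul_prod_factorial a b hk
  have hbox := numLinExts_rectangle a b
  have hsum : a * k + b * k + 1 + a * b = a * b + (a * k + (b * k + 1)) := by ring
  rw [hsum, Nat.choose_symm_add] at hD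
  have hcut := Nat.add_choose_mul_factorial_mul_factorial (a * k) (b * k + 1)
  have hall := Nat.add_choose_mul_factorial_mul_factorial (a * b) (a * k + (b * k + 1))
  rw [← Nat.choose_symm_add] at hcut
  linear_combination (a * k + (b * k + 1)).choose (a * k) * (b * k + 1)! * hD +
    (∏ s ∈ range (a + b), s !) * (b * k)! * numLinExts (range b ×ˢ range a) *
      (a * b + (a * k + (b * k + 1))).choose (a * k + (b * k + 1)) * hcut +
    (a * k + (b * k + 1))! * (b * k)! *
      (a * b + (a * k + (b * k + 1))).choose (a * k + (b * k + 1)) * hbox +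
    (b * k)! * (∏ s ∈ range a, s !) * (∏ s ∈ range b, s !) * hall

theorem numLinExts_rectangle_mul_rectangle (a b k : ℕ) :
    ((k + b) * a + (b * k + 1)).choose ((k + b) * a) *
        (numLinExts (range a ×ˢ range (k + b)) * numLinExts (range k ×ˢ range b)) *
        ((b * k + 1)! * ∏ s ∈ range (a + b), (s + k)!) =
      ((k + b) * a + (b * k + 1))! * (b * k)! * ((∏ s ∈ range a, s !) * ∏ s ∈ range b, s !) := by
  have htall := numLinExts_rectangle (k + b) a
  have hwide := numLinExts_rectangle b k
  have hprod := prod_range_factorial_add_mul (a + b) k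
  have hall := Nat.add_choose_mul_factorial_mul_factorial ((k + b) * a) (b * k + 1)
  rw [← Nat.choose_symm_add] at hall
  rw [show k + b + a = a + b + k by ring, ← hprod, add_comm k b] at htall
  rw [add_comm k b] at *
  have hpos : 0 < (∏ s ∈ range k, s !) * ∏ s ∈ range (b + k), s ! :=
    Nat.mul_pos (prod_pos fun s _ => s.factorial_pos) (prod_pos fun s _ => s.factorial_pos)
  refine Nat.eq_of_mul_eq_mul_right hpos ?_
  linear_combination
    (b * k + 1)! * ((b + k) * a + (b * k + 1)).choose ((b + k) * a) *
      congrArg₂ (· * ·) htall hwide +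
    (b * k)! * (∏ s ∈ range a, s !) * (∏ s ∈ range b, s !) * (∏ s ∈ range k, s !) *
      (∏ s ∈ range (b + k), s !) * hall

theorem numLinExts_truncatedRect_mul_choose (a b : ℕ) (hk : 0 < k) :
    numLinExts (truncatedRect a b k) * (a * k + (b * k + 1)).choose (a * k) =
      ((k + b) * a + (b * k + 1)).choose ((k + b) * a) *
        (numLinExts (range a ×ˢ range (k + b)) * numLinExts (range k ×ˢ range b)) := by
  have hpos : 0 < (b * k + 1)! * ∏ s ∈ range (a + b), (s + k)! :=
    Nat.mul_pos (b * k + 1).factorial_pos (prod_pos fun s _ => (s + k).factorial_pos)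
  refine Nat.eq_of_mul_eq_mul_right hpos ?_
  rw [numLinExts_truncatedRect_mul_choose_mul a b hk, numLinExts_rectangle_mul_rectangle,
    show a * b + (a * k + (b * k + 1)) = (k + b) * a + (b * k + 1) by ring]

end TruncatedRectangle

theorem stmt10_general (n m k : ℕ) (hk : 0 < k) (hn : k ≤ n) (hm : k ≤ m) :
    (sytCard (((Finset.range m) ×ˢ (Finset.range n)).filter fun c =>
        ¬((c.1 + 1 < k ∧ n - k ≤ c.2) ∨ (c.1 + 1 = k ∧ n - k + 1 ≤ c.2))) : ℚ) =
      ((n * m - k ^ 2 + 1).choose (m * (n - k)) : ℚ) *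
        ((k * (m + n - 2 * k) + 1).choose (k * n - k ^ 2) : ℚ)⁻¹ *
        (sytCard ((Finset.range (n - k)) ×ˢ (Finset.range m)) : ℚ) *
        (sytCard ((Finset.range k) ×ˢ (Finset.range (m - k))) : ℚ) := by
  obtain ⟨a, rfl⟩ := Nat.exists_eq_add_of_le' hn
  obtain ⟨b, rfl⟩ := Nat.exists_eq_add_of_le hm
  have hcells : (a + k) * (k + b) - k ^ 2 + 1 = (k + b) * a + (b * k + 1) := by
    rw [Nat.sub_eq_of_eq_add (by ring : (a + k) * (k + b) = (k + b) * a + b * k + k ^ 2), add_assoc]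
  have hcut : k * (k + b + (a + k) - 2 * k) + 1 = a * k + (b * k + 1) := by
    rw [Nat.sub_eq_of_eq_add (by ring : k + b + (a + k) = a + b + 2 * k)]
    ring
  have hleft : k * (a + k) - k ^ 2 = a * k := Nat.sub_eq_of_eq_add (by ring)
  have hchoose : ((a * k + (b * k + 1)).choose (a * k) : ℚ) ≠ 0 :=
    Nat.cast_ne_zero.2 (Nat.choose_pos (Nat.le_add_right _ _)).ne'
  have hD : ∀ c ∈ truncatedRect a b k, ∀ c' ∈ truncatedRect a b k, c ≤ c' →
      (c'.1, c.2) ∈ truncatedRect a b k :=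
    fun _ hc _ hc' hle => mk_mem_truncatedRect_of_le hc hc' hle.2
  simp only [Nat.add_sub_cancel, Nat.add_sub_cancel_left, hcells, hcut, hleft,
    sytCard_range_product]
  rw [← truncatedRect, sytCard_eq_numLinExts hD, mul_assoc, mul_right_comm,
    eq_mul_inv_iff_mul_eq₀ hchoose]
  exact_mod_cast numLinExts_truncatedRect_mul_choose a b hk

/-- the number of standard tableaux of the truncated shape
`n^m \ (k^{k-1}, k-1)` (an `m×n` rectangle with a `k×k` square minus a corner box
removed from its upper right corner) equals
`binom(nm-k²+1, m(n-k)) · binom(k(m+n-2k)+1, kn-k²)⁻¹ · f_{(m^{n-k})} · f_{((m-k)^k)}`. -/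
theorem stmt10 (n m k : ℕ) (hk : 0 < k) (hn : 2 * k - 1 ≤ n) (hnm : n ≤ m) :
    (sytCard (((Finset.range m) ×ˢ (Finset.range n)).filter fun c =>
        ¬((c.1 + 1 < k ∧ n - k ≤ c.2) ∨ (c.1 + 1 = k ∧ n - k + 1 ≤ c.2))) : ℚ) =
      ((n * m - k ^ 2 + 1).choose (m * (n - k)) : ℚ) *
        ((k * (m + n - 2 * k) + 1).choose (k * n - k ^ 2) : ℚ)⁻¹ *
        (sytCard ((Finset.range (n - k)) ×ˢ (Finset.range m)) : ℚ) *
        (sytCard ((Finset.range k) ×ˢ (Finset.range (m - k))) : ℚ) :=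
  stmt10_general n m k hk (by omega) (by omega)
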